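/- arXiv:2206.04842 — 4 statements merged into one kernel-verified Lean document; each statement's English description precedes it below -/
import Mathlib

section
/- Let a ≥ 1 and let d be a positive integer with ⌈d/a⌉ ≥ 12, and let n satisfy 1 ≤ n ≤ d + 3a. If d ≢ −3 (mod a), then q_d^{(a)}(n) ≥ Q_d^{(a,-)}(n). If d ≡ −3 (mod a), then q_d^{(a)}(n) ≥ Q_d^{(a,-)}(n) for all such n except possibly n = d + 3 + a. -/
/-- `q_d^{(a)}(n)`: the number of partitions of `n` into parts of size at least `a`
such that successive parts differ by at least `d`. -/
noncomputable def gapCount (d a n : ℕ) : ℕ :=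
  Nat.card {p : n.Partition //
    (∀ x ∈ p.parts, a ≤ x) ∧
    List.Chain' (fun x y => x + d ≤ y) (p.parts.sort (· ≤ ·))}

/-- `Q_d^{(a)}(n)`: the number of partitions of `n` into parts congruent to `a` or `-a`
modulo `d + 3`. -/
noncomputable def congCount (d a n : ℕ) : ℕ :=
  Nat.card {p : n.Partition //
    ∀ x ∈ p.parts, x ≡ a [MOD d + 3] ∨ x + a ≡ 0 [MOD d + 3]}

/-- `Q_d^{(a,-)}(n)`: as `congCount`, but no part equals `d + 3 - a`. -/
noncomputable def congMinusCount (d a n : ℕ) : ℕ :=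
  Nat.card {p : n.Partition //
    (∀ x ∈ p.parts, x ≡ a [MOD d + 3] ∨ x + a ≡ 0 [MOD d + 3]) ∧
    ∀ x ∈ p.parts, x ≠ d + 3 - a}

/-- `Q_d^{(a,-,-)}(n)`: as `congCount`, but no part equals `a` or `d + 3 - a`. -/
noncomputable def congMinusMinusCount (d a n : ℕ) : ℕ :=
  Nat.card {p : n.Partition //
    (∀ x ∈ p.parts, x ≡ a [MOD d + 3] ∨ x + a ≡ 0 [MOD d + 3]) ∧
    (∀ x ∈ p.parts, x ≠ a) ∧ ∀ x ∈ p.parts, x ≠ d + 3 - a}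

/-- `ρ(R; n)`: the number of partitions of `n` all of whose parts lie in `R`. -/
noncomputable def rhoCount (R : Set ℕ) (n : ℕ) : ℕ :=
  Nat.card {p : n.Partition // ∀ x ∈ p.parts, x ∈ R}

/-- `h_n^{(a)}`: the least nonnegative residue of `-n` modulo `a`,
so that `n + negRes n a = a * ⌈n/a⌉`. -/
def negRes (n a : ℕ) : ℕ := (a - n % a) % a

/-- `⌈d/a⌉` for natural numbers. -/
def cdiv (d a : ℕ) : ℕ := (d + a - 1) / a

theorem Multiset.eq_replicate_add_replicate {α : Type*} [DecidableEq α] {a b : α} (hab : a ≠ b)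
    {m : Multiset α} (h : ∀ x ∈ m, x = a ∨ x = b) :
    m = Multiset.replicate (m.count a) a + Multiset.replicate (m.count b) b := by
  ext x
  rw [Multiset.count_add, Multiset.count_replicate, Multiset.count_replicate]
  by_cases hx : x ∈ m
  · rcases h x hx with rfl | rfl
    · simp [hab.symm]
    · simp [hab]
  · rw [Multiset.count_eq_zero_of_notMem hx]
    split_ifs <;> simp_all

/-- Among the numbers up to `d + 3 * a`, only `a` and `d + 3 + a` are congruent to `± a` modulo
`d + 3` and different from `d + 3 - a`, provided `d` is large compared with `a`. -/
theorem eq_or_eq_of_modEq {a d x : ℕ} (had : 11 * a < d) (hx : 0 < x) (hx2 : x ≤ d + 3 * a)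
    (h : x ≡ a [MOD d + 3] ∨ x + a ≡ 0 [MOD d + 3]) (hne : x ≠ d + 3 - a) :
    x = a ∨ x = d + 3 + a := by
  rcases h with h | h
  · have h1 : x % (d + 3) = a := by
      rw [h, Nat.mod_eq_of_lt (by omega)]
    have h2 := Nat.div_add_mod x (d + 3)
    have h3 : x / (d + 3) < 2 := by
      rw [Nat.div_lt_iff_lt_mul (by omega)]
      omega
    interval_cases x / (d + 3) <;> omega
  · obtain ⟨k, hk⟩ := (Nat.modEq_zero_iff_dvd).1 h
    have h3 : k < 2 := by
      by_contra! h4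
      have := Nat.mul_le_mul_left (d + 3) h4
      omega
    interval_cases k <;> omega

/-- A partition counted by `congMinusCount` consists of copies of `a` and of at most one part
`d + 3 + a`. -/
theorem parts_eq_of_congMinus {a d n : ℕ} (had : 11 * a < d) (hn2 : n ≤ d + 3 * a)
    (p : n.Partition)
    (hp : (∀ x ∈ p.parts, x ≡ a [MOD d + 3] ∨ x + a ≡ 0 [MOD d + 3]) ∧
      ∀ x ∈ p.parts, x ≠ d + 3 - a) :
    ∃ k j, p.parts = Multiset.replicate k a + Multiset.replicate j (d + 3 + a) ∧
      k * a + j * (d + 3 + a) = n ∧ j < 2 := by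
  have h := Multiset.eq_replicate_add_replicate (a := a) (b := d + 3 + a) (by omega)
    (m := p.parts) fun x hx => eq_or_eq_of_modEq had (p.parts_pos hx)
      ((p.le_of_mem_parts hx).trans hn2) (hp.1 x hx) (hp.2 x hx)
  have hs := p.parts_sum
  rw [h, Multiset.sum_add, Multiset.sum_replicate, Multiset.sum_replicate, smul_eq_mul,
    smul_eq_mul] at hs
  refine ⟨_, _, h, hs, ?_⟩
  by_contra! hj
  have := Nat.mul_le_mul_right (d + 3 + a) hj
  omega

theorem congMinusCount_le_one {a d n : ℕ} (ha : 1 ≤ a) (had : 11 * a < d)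
    (hn2 : n ≤ d + 3 * a) (h : ¬ (a ∣ d + 3 ∧ a ∣ n ∧ d + 3 + a ≤ n)) :
    congMinusCount d a n ≤ 1 := by
  unfold congMinusCount
  rw [Finite.card_le_one_iff_subsingleton]
  refine ⟨fun p q => Subtype.ext (Nat.Partition.ext ?_)⟩
  obtain ⟨k, j, hp, hs, hj⟩ := parts_eq_of_congMinus had hn2 p.1 p.2
  obtain ⟨k', j', hp', hs', hj'⟩ := parts_eq_of_congMinus had hn2 q.1 q.2
  have mixed : ∀ u v, u * a + 0 * (d + 3 + a) = n → v * a + 1 * (d + 3 + a) = n → False := by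
    intro u v hu hv
    have hn : a ∣ n := ⟨u, by rw [← hu]; ring⟩
    refine h ⟨?_, hn, by omega⟩
    rw [← hv, one_mul, Nat.dvd_add_right (Dvd.intro_left v rfl)] at hn
    exact (Nat.dvd_add_left dvd_rfl).1 hn
  have hjj : j = j' := by
    interval_cases j <;> interval_cases j'
    · rfl
    · exact (mixed _ _ hs hs').elim
    · exact (mixed _ _ hs' hs).elim
    · rfl
  subst hjj
  have hk : k = k' := Nat.eq_of_mul_eq_mul_right ha (by omega)
  rw [hp, hp', hk]

theorem congMinusCount_le_two {a d n : ℕ} (ha : 1 ≤ a) (had : 11 * a < d)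
    (hn2 : n ≤ d + 3 * a) : congMinusCount d a n ≤ 2 := by
  choose! k j hp hs hj using fun p : n.Partition => parts_eq_of_congMinus had hn2 p
  have hinj : Function.Injective
      (fun p : {p : n.Partition //
        (∀ x ∈ p.parts, x ≡ a [MOD d + 3] ∨ x + a ≡ 0 [MOD d + 3]) ∧
        ∀ x ∈ p.parts, x ≠ d + 3 - a} => (⟨j p.1, hj p.1 p.2⟩ : Fin 2)) := by
    intro p q hpq
    have hjj : j p.1 = j q.1 := congrArg Fin.val hpq
    have hsp := hs p.1 p.2
    have hsq := hs q.1 q.2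
    rw [hjj] at hsp
    have hk : k p.1 = k q.1 := Nat.eq_of_mul_eq_mul_right ha (by omega)
    refine Subtype.ext (Nat.Partition.ext ?_)
    rw [hp p.1 p.2, hp q.1 q.2, hjj, hk]
  simpa [congMinusCount] using Nat.card_le_card_of_injective _ hinj

theorem congMinusCount_eq_zero {a d n : ℕ} (had : 11 * a < d) (hn : 1 ≤ n) (hna : n < a) :
    congMinusCount d a n = 0 := by
  unfold congMinusCount
  rw [Finite.card_eq_zero_iff]
  refine ⟨fun p => ?_⟩
  obtain ⟨k, j, -, hs, -⟩ := parts_eq_of_congMinus had (by omega) p.1 p.2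
  rcases Nat.eq_zero_or_pos k with rfl | hk
  · rcases Nat.eq_zero_or_pos j with rfl | hj
    · omega
    · have := Nat.mul_le_mul_right (d + 3 + a) hj
      omega
  · have := Nat.mul_le_mul_right a hk
    omega

theorem one_le_gapCount {a d n : ℕ} (hn : 1 ≤ n) (hna : a ≤ n) : 1 ≤ gapCount d a n := by
  unfold gapCount
  have : Nonempty {p : n.Partition // (∀ x ∈ p.parts, a ≤ x) ∧
      List.Chain' (fun x y => x + d ≤ y) (p.parts.sort (· ≤ ·))} := by
    refine ⟨⟨⟨{n}, by simp; omega, by simp⟩, ?_, ?_⟩⟩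
    · simpa using hna
    · change List.IsChain _ _
      simp
  exact Finite.card_pos

theorem two_le_gapCount {a d n : ℕ} (ha : 1 ≤ a) (hna : a + d + a ≤ n) :
    2 ≤ gapCount d a n := by
  unfold gapCount
  have : Nontrivial {p : n.Partition // (∀ x ∈ p.parts, a ≤ x) ∧
      List.Chain' (fun x y => x + d ≤ y) (p.parts.sort (· ≤ ·))} := by
    refine ⟨⟨⟨{n}, by simp; omega, by simp⟩, ?_, ?_⟩,
      ⟨⟨a ::ₘ {n - a}, by simp; omega, by simp; omega⟩, ?_, ?_⟩, ?_⟩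
    · simp; omega
    · change List.IsChain _ _
      simp
    · simp; omega
    · change List.IsChain _ _
      rw [Multiset.sort_cons _ _ _ (by simp; omega)]
      simp; omega
    · intro h
      have := congrArg (fun p => Multiset.card p.1.parts) h
      simp at this
  exact Finite.one_lt_card

theorem stmt13 (a d n : ℕ) (ha : 1 ≤ a) (hd : 1 ≤ d) (hceil : 12 ≤ cdiv d a)
    (hn : 1 ≤ n) (hn2 : n ≤ d + 3 * a) :
    (¬ a ∣ d + 3 → congMinusCount d a n ≤ gapCount d a n) ∧
    (a ∣ d + 3 → n ≠ d + 3 + a → congMinusCount d a n ≤ gapCount d a n) := by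
  have had : 11 * a < d := by
    rw [cdiv, Nat.le_div_iff_mul_le ha] at hceil
    omega
  have key : ¬ (a ∣ d + 3 ∧ a ∣ n ∧ d + 3 + a ≤ n) →
      congMinusCount d a n ≤ gapCount d a n := by
    intro h
    rcases lt_or_ge n a with hna | hna
    · simp [congMinusCount_eq_zero had hn hna]
    · exact (congMinusCount_le_one ha had hn2 h).trans (one_le_gapCount hn hna)
  refine ⟨fun h => key fun h' => h h'.1, fun _ hne => ?_⟩
  by_cases h : a ∣ d + 3 ∧ a ∣ n ∧ d + 3 + a ≤ n
  · obtain ⟨⟨u, hu⟩, ⟨v, hv⟩, hle⟩ := h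
    have huv : u + 2 ≤ v := by
      by_contra! hlt
      have := Nat.mul_le_mul_left a (show v ≤ u + 1 by omega)
      rw [mul_add, mul_one] at this
      omega
    have := Nat.mul_le_mul_left a huv
    rw [mul_add] at this
    exact (congMinusCount_le_two ha had hn2).trans (two_le_gapCount ha (by omega))
  · exact key h
end

section
/- For all integers d ≥ 12 and all integers n with d + 2 ≤ n ≤ 5d, one has q_d^{(1)}(n) ≥ Q_{d−4}^{(1,-)}(n). -/
/-- A finite set of lists with positive entries, sum `n` and successive gaps at least `d`
injects into the partitions counted by `gapCount d 1 n`. -/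
theorem card_le_gapCount (d n : ℕ) (S : Finset (List ℕ))
    (hS : ∀ l ∈ S, l.sum = n ∧ (∀ x ∈ l, 1 ≤ x) ∧ List.IsChain (fun x y => x + d ≤ y) l) :
    S.card ≤ gapCount d 1 n := by
  have hsort : ∀ l ∈ S, (l : Multiset ℕ).sort (· ≤ ·) = l := by
    intro l hl
    have hle : l.Pairwise (· ≤ ·) :=
      List.isChain_iff_pairwise.mp ((hS l hl).2.2.imp fun x y h => by omega)
    rw [Multiset.coe_sort]
    exact List.mergeSort_of_pairwise (by simpa using hle)
  rw [← Nat.card_eq_finsetCard S]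
  refine Nat.card_le_card_of_injective
    (fun l : S => ⟨⟨(l.1 : Multiset ℕ), fun {i} hi => (hS l.1 l.2).2.1 i (by simpa using hi),
      by simpa using (hS l.1 l.2).1⟩, ?_, ?_⟩) ?_
  · intro x hx
    exact (hS l.1 l.2).2.1 x (by simpa using hx)
  · have h := (hS l.1 l.2).2.2
    rw [← hsort l.1 l.2] at h
    exact h
  · intro l₁ l₂ h
    have h' : (l₁.1 : Multiset ℕ) = (l₂.1 : Multiset ℕ) :=
      congrArg (fun p => p.1.parts) h
    apply Subtype.ext
    rw [← hsort l₁.1 l₁.2, ← hsort l₂.1 l₂.2, h']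

/-- The partitions `n`, `(j + 1) + (n - j - 1)` and `1 + (d + 1 + j) + (n - d - 2 - j)` give a
lower bound for `gapCount d 1 n`. -/
theorem le_gapCount_one (d n : ℕ) (hd : 0 < d) (hn : 0 < n) :
    1 + (n - d) / 2 + (n - 3 * d - 1) / 2 ≤ gapCount d 1 n := by
  let f : Unit ⊕ Fin ((n - d) / 2) ⊕ Fin ((n - 3 * d - 1) / 2) → List ℕ
    | .inl _ => [n]
    | .inr (.inl j) => [j + 1, n - j - 1]
    | .inr (.inr j) => [1, d + 1 + j, n - d - 2 - j]
  have hf : Function.Injective f := by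
    rintro (_ | i | i) (_ | j | j) h <;> simp [f] at h ⊢ <;> omega
  have h := card_le_gapCount d n (Finset.univ.map ⟨f, hf⟩) ?_
  · simpa [add_assoc] using h
  · intro l hl
    obtain ⟨i, -, rfl⟩ := Finset.mem_map.mp hl
    rcases i with _ | i | i <;> simp [f] <;> omega

/-- Multiplicities of the parts `d`, `2d - 3`, `2d - 1`, `3d - 4`, `3d - 2`, `4d - 5`, `4d - 3`,
`5d - 6`, `5d - 4`, in this order. -/
abbrev MultVec := ℕ × ℕ × ℕ × ℕ × ℕ × ℕ × ℕ × ℕ × ℕ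

/-- The coefficient of `d` in the total of the parts. -/
def MultVec.weight : MultVec → ℕ
  | (a, b, b', c, c', e, e', f, f') =>
    a + 2 * b + 2 * b' + 3 * c + 3 * c' + 4 * e + 4 * e' + 5 * f + 5 * f'

/-- The amount by which the total of the parts falls short of `weight * d`. -/
def MultVec.defect : MultVec → ℕ
  | (_, b, b', c, c', e, e', f, f') =>
    3 * b + b' + 4 * c + 2 * c' + 5 * e + 3 * e' + 6 * f + 4 * f'

/-- A finite box containing all multiplicity vectors of weight at most `5`. -/
def multBox : Finset MultVec :=
  .range 6 ×ˢ .range 3 ×ˢ .range 3 ×ˢ .range 2 ×ˢ .range 2 ×ˢ .range 2 ×ˢ .range 2 ×ˢ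
    .range 2 ×ˢ .range 2

/-- The multiplicity vectors of weight less than `W`, or of weight `W` and defect at least `c`. -/
def lowVecs (W c : ℕ) : Finset MultVec :=
  multBox.filter fun t => t.weight < W ∨ t.weight = W ∧ c ≤ t.defect

/-- The multiplicities in `s` of the parts `d`, `2d - 3`, …, `5d - 4`. -/
def multVec (d : ℕ) (s : Multiset ℕ) : MultVec :=
  (s.count d, s.count (2 * d - 3), s.count (2 * d - 1), s.count (3 * d - 4),
    s.count (3 * d - 2), s.count (4 * d - 5), s.count (4 * d - 3), s.count (5 * d - 6),
    s.count (5 * d - 4))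

/-- The admissible parts that are at most `5d`. -/
def smallParts (d : ℕ) : Finset ℕ :=
  {1, d, 2 * d - 3, 2 * d - 1, 3 * d - 4, 3 * d - 2, 4 * d - 5, 4 * d - 3, 5 * d - 6, 5 * d - 4}

theorem mem_smallParts {d x : ℕ} (hd : 12 ≤ d) (hx : 0 < x) (hx5 : x ≤ 5 * d)
    (h : x ≡ 1 [MOD d - 4 + 3] ∨ x + 1 ≡ 0 [MOD d - 4 + 3]) (hne : x ≠ d - 4 + 3 - 1) :
    x ∈ smallParts d := by
  obtain ⟨k, rfl⟩ := Nat.exists_eq_add_of_le hd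
  have hm : 12 + k - 4 + 3 = k + 11 := by omega
  rw [hm] at h hne
  simp only [smallParts, Finset.mem_insert, Finset.mem_singleton]
  rcases h with h | h
  · obtain ⟨q, hq⟩ := (Nat.modEq_iff_dvd' hx).mp h.symm
    have hq5 : q ≤ 5 := by
      by_contra! hlt
      have := Nat.mul_le_mul_left (k + 11) hlt
      omega
    interval_cases q <;> omega
  · obtain ⟨q, hq⟩ := (Nat.modEq_zero_iff_dvd).mp h
    have hq5 : q ≤ 5 := by
      by_contra! hlt
      have := Nat.mul_le_mul_left (k + 11) hlt
      omega
    interval_cases q <;> omega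

theorem sum_add_defect {d : ℕ} (hd : 12 ≤ d) {s : Multiset ℕ} (hs : ∀ x ∈ s, x ∈ smallParts d) :
    s.sum + (multVec d s).defect = s.count 1 + (multVec d s).weight * d := by
  have hsub : s.toFinset ⊆ smallParts d := fun x hx => hs x (Multiset.mem_toFinset.mp hx)
  rw [Finset.sum_multiset_count_of_subset s _ hsub]
  obtain ⟨k, rfl⟩ := Nat.exists_eq_add_of_le hd
  unfold smallParts
  repeat rw [Finset.sum_insert (by
    simp only [Finset.mem_insert, Finset.mem_singleton]; omega)]
  rw [Finset.sum_singleton]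
  simp only [multVec, MultVec.weight, MultVec.defect, smul_eq_mul]
  have h1 : 2 * (12 + k) - 3 = 2 * k + 21 := by omega
  have h2 : 2 * (12 + k) - 1 = 2 * k + 23 := by omega
  have h3 : 3 * (12 + k) - 4 = 3 * k + 32 := by omega
  have h4 : 3 * (12 + k) - 2 = 3 * k + 34 := by omega
  have h5 : 4 * (12 + k) - 5 = 4 * k + 43 := by omega
  have h6 : 4 * (12 + k) - 3 = 4 * k + 45 := by omega
  have h7 : 5 * (12 + k) - 6 = 5 * k + 54 := by omega
  have h8 : 5 * (12 + k) - 4 = 5 * k + 56 := by omega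
  rw [h1, h2, h3, h4, h5, h6, h7, h8]
  ring

theorem MultVec.two_mul_defect_le (t : MultVec) : 2 * t.defect ≤ 3 * t.weight := by
  obtain ⟨a, b, b', c, c', e, e', f, f'⟩ := t
  simp only [weight, defect]
  omega

theorem MultVec.mem_multBox {t : MultVec} (ht : t.weight ≤ 5) : t ∈ multBox := by
  obtain ⟨a, b, b', c, c', e, e', f, f'⟩ := t
  simp only [weight] at ht
  simp only [multBox, Finset.mem_product, Finset.mem_range]
  omega

theorem congMinusCount_le_card_lowVecs {d n : ℕ} (W c : ℕ) (hd : 12 ≤ d) (hn : n ≤ 5 * d)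
    (hc : n + c ≤ W * d ∨ c = 0) (hW : W = 5 ∨ n + 3 * (W + 1) / 2 < (W + 1) * d) :
    congMinusCount (d - 4) 1 n ≤ (lowVecs W c).card := by
  have hsmall : ∀ p : n.Partition,
      ((∀ x ∈ p.parts, x ≡ 1 [MOD d - 4 + 3] ∨ x + 1 ≡ 0 [MOD d - 4 + 3]) ∧
        ∀ x ∈ p.parts, x ≠ d - 4 + 3 - 1) → ∀ x ∈ p.parts, x ∈ smallParts d := by
    intro p hp x hx
    have hxn : x ≤ n := p.parts_sum ▸ Multiset.le_sum_of_mem hx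
    exact mem_smallParts hd (p.parts_pos hx) (hxn.trans hn) (hp.1 x hx) (hp.2 x hx)
  rw [← Nat.card_eq_finsetCard]
  refine Nat.card_le_card_of_injective (fun p => ⟨multVec d p.1.parts, ?_⟩) ?_
  · have hsum := sum_add_defect hd (hsmall p.1 p.2)
    rw [p.1.parts_sum] at hsum
    have hdef := (multVec d p.1.parts).two_mul_defect_le
    have hmem := @MultVec.mem_multBox (multVec d p.1.parts)
    rw [lowVecs, Finset.mem_filter]
    generalize multVec d p.1.parts = t at hsum hdef hmem ⊢
    have hw : t.weight ≤ 5 := by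
      by_contra! hlt
      nlinarith
    refine ⟨hmem hw, ?_⟩
    rcases lt_trichotomy t.weight W with h | h | h
    · exact .inl h
    · rw [h] at hsum
      exact .inr ⟨h, by omega⟩
    · have hmul : (W + 1) * (2 * d - 3) ≤ t.weight * (2 * d - 3) := Nat.mul_le_mul_right _ h
      zify [show 3 ≤ 2 * d by omega] at hmul
      have hlt : 2 * n + 3 * (W + 1) < 2 * ((W + 1) * d) := by omega
      nlinarith
  · rintro ⟨p, hp⟩ ⟨p', hp'⟩ h
    have h : multVec d p.parts = multVec d p'.parts := congrArg Subtype.val h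
    have hsum := sum_add_defect hd (hsmall p hp)
    have hsum' := sum_add_defect hd (hsmall p' hp')
    rw [p.parts_sum] at hsum
    rw [p'.parts_sum, ← h] at hsum'
    have hone : p.parts.count 1 = p'.parts.count 1 := by omega
    refine Subtype.ext (Nat.Partition.ext (Multiset.ext.mpr fun x => ?_))
    by_cases hx : x ∈ smallParts d
    · simp only [multVec, Prod.mk.injEq] at h
      simp only [smallParts, Finset.mem_insert, Finset.mem_singleton] at hx
      rcases hx with rfl | rfl | rfl | rfl | rfl | rfl | rfl | rfl | rfl | rfl <;> tauto
    · rw [Multiset.count_eq_zero_of_notMem fun hm => hx (hsmall p hp x hm),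
        Multiset.count_eq_zero_of_notMem fun hm => hx (hsmall p' hp' x hm)]

theorem stmt14 (d n : ℕ) (hd : 12 ≤ d) (hn1 : d + 2 ≤ n) (hn2 : n ≤ 5 * d) :
    congMinusCount (d - 4) 1 n ≤ gapCount d 1 n := by
  refine le_trans ?_ (le_gapCount_one d n (by omega) (by omega))
  have key := fun W c => congMinusCount_le_card_lowVecs (n := n) W c hd hn2
  rcases lt_or_ge n (2 * d - 3) with h2 | h2
  · have h := key 1 0 (by omega) (by omega)
    rw [show (lowVecs 1 0).card = 2 by decide +kernel] at h
    omega
  rcases lt_or_ge n (3 * d - 4) with h3 | h3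
  · have h := key 2 0 (by omega) (by omega)
    rw [show (lowVecs 2 0).card = 5 by decide +kernel] at h
    omega
  rcases lt_or_ge n (4 * d - 6) with h4 | h4
  · have h := key 3 0 (by omega) (by omega)
    rw [show (lowVecs 3 0).card = 10 by decide +kernel] at h
    omega
  rcases lt_or_ge n (4 * d - 4) with h4' | h4'
  · have h := key 4 5 (by omega) (by omega)
    rw [show (lowVecs 4 5).card = 12 by decide +kernel] at h
    omega
  rcases lt_or_ge n (5 * d - 7) with h5 | h5
  · have h := key 4 0 (by omega) (by omega)
    rw [show (lowVecs 4 0).card = 20 by decide +kernel] at h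
    omega
  have hcard : ∀ c < 8, (lowVecs 5 c).card ≤ 36 - c := by decide +kernel
  obtain ⟨c, hc⟩ : ∃ c, n + c = 5 * d := ⟨5 * d - n, by omega⟩
  have h := key 5 c (by omega) (by omega)
  have := hcard c (by omega)
  omega
end

section
/- For all integers d ≥ 31 and all integers n ≥ d + 2, one has ρ(T_{5,d}; n) ≥ Q_{d−3}^{(1,-)}(n). -/
/-- The pairs `⟨b, a⟩` of natural numbers with `b * v + a * u ≤ n`. -/
def latticePairs (u v n : ℕ) : Finset (Σ _ : ℕ, ℕ) :=
  (Finset.range (n / v + 1)).sigma fun b => Finset.range ((n - b * v) / u + 1)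

theorem mem_latticePairs {u v n : ℕ} (hu : 0 < u) (hv : 0 < v) (p : Σ _ : ℕ, ℕ) :
    p ∈ latticePairs u v n ↔ p.1 * v + p.2 * u ≤ n := by
  simp only [latticePairs, Finset.mem_sigma, Finset.mem_range, Nat.lt_succ_iff,
    Nat.le_div_iff_mul_le hu, Nat.le_div_iff_mul_le hv]
  omega

theorem card_latticePairs_of_lt {u v n : ℕ} (h : n < v) :
    (latticePairs u v n).card = n / u + 1 := by
  simp [latticePairs, Nat.div_eq_of_lt h]

theorem card_latticePairs_add {u v : ℕ} (hv : 0 < v) (n : ℕ) :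
    (latticePairs u v (n + v)).card = (latticePairs u v n).card + ((n + v) / u + 1) := by
  simp only [latticePairs, Finset.card_sigma, Finset.card_range, Nat.add_div_right n hv]
  rw [Finset.sum_range_succ']
  simp only [zero_mul, Nat.sub_zero]
  congr 1
  refine Finset.sum_congr rfl fun b _ => ?_
  rw [add_mul, one_mul, Nat.add_sub_add_right]

theorem card_latticePairs_mono {u v m n : ℕ} (hu : 0 < u) (hv : 0 < v) (h : m ≤ n) :
    (latticePairs u v m).card ≤ (latticePairs u v n).card := by
  refine Finset.card_le_card fun p hp => ?_
  rw [mem_latticePairs hu hv] at hp ⊢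
  omega

theorem two_le_card_latticePairs {d n : ℕ} (h : d + 2 ≤ n) :
    2 ≤ (latticePairs (d + 2) (d + 4) n).card := by
  refine le_trans ?_ (card_latticePairs_mono (by omega) (by omega) h)
  rw [card_latticePairs_of_lt (by omega), Nat.div_self (by omega)]

theorem card_latticePairs_succ_of_lt {d n : ℕ} (hd : 0 < d) (h : n < 2 * (d + 1)) :
    (latticePairs (d + 1) (3 * d + 1) n).card ≤ 2 := by
  by_cases h' : n < 3 * d + 1
  · rw [card_latticePairs_of_lt h']
    have : n / (d + 1) < 2 := by rw [Nat.div_lt_iff_lt_mul (by omega)]; omega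
    omega
  · omega

theorem div_succ_le_div_add_div {d n : ℕ} (hd : 8 ≤ d) (hn : 3 * d + 1 ≤ n) :
    n / (d + 1) + 1 ≤ n / (d + 2) + 1 + ((n - (d + 4)) / (d + 2) + 1) := by
  have hq := Nat.div_mul_le_self n (d + 1)
  have hw := Nat.lt_div_mul_add (a := n - (d + 4)) (by omega : 0 < d + 2)
  have hwu : (n - (d + 4)) / (d + 2) + 1 ≤ n / (d + 2) := by
    rw [Nat.le_div_iff_mul_le (by omega)]
    have := Nat.div_mul_le_self (n - (d + 4)) (d + 2)
    rw [add_mul]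
    omega
  have hu : 2 ≤ n / (d + 2) := by rw [Nat.le_div_iff_mul_le (by omega)]; omega
  generalize n / (d + 1) = q at *
  generalize n / (d + 2) = u at *
  generalize (n - (d + 4)) / (d + 2) = w at *
  have hw' : n < w * (d + 2) + (d + 2) + (d + 4) := by omega
  by_contra! hlt
  have : (u + w + 2) * (d + 1) ≤ q * (d + 1) := Nat.mul_le_mul_right _ (by omega)
  nlinarith

theorem card_latticePairs_le {d : ℕ} (hd : 8 ≤ d) (n : ℕ) (hn : n ≠ d + 1) :
    (latticePairs (d + 1) (3 * d + 1) n).card ≤ (latticePairs (d + 2) (d + 4) n).card := by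
  induction n using Nat.strong_induction_on with
  | _ n ih =>
  rcases lt_or_ge n (3 * d + 1) with h | h
  · rw [card_latticePairs_of_lt h]
    rcases lt_or_ge n (d + 4) with h4 | h4
    · rw [card_latticePairs_of_lt h4]
      rcases lt_or_ge n (d + 2) with h2 | h2
      · simp [Nat.div_eq_of_lt (by omega : n < d + 1)]
      · have a1 : n / (d + 1) < 2 := by rw [Nat.div_lt_iff_lt_mul (by omega)]; omega
        have a2 : 1 ≤ n / (d + 2) := by rw [Nat.le_div_iff_mul_le (by omega)]; omega
        omega
    · have a1 : n / (d + 1) < 3 := by rw [Nat.div_lt_iff_lt_mul (by omega)]; omega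
      obtain ⟨m, rfl⟩ := Nat.exists_eq_add_of_le' h4
      rw [card_latticePairs_add (by omega)]
      have a2 : 1 ≤ (m + (d + 4)) / (d + 2) := by rw [Nat.le_div_iff_mul_le (by omega)]; omega
      have a3 : 1 ≤ (latticePairs (d + 2) (d + 4) m).card :=
        Finset.card_pos.mpr ⟨⟨0, 0⟩, by rw [mem_latticePairs] <;> simp⟩
      omega
  · have hdiv := div_succ_le_div_add_div hd h
    obtain ⟨m, rfl⟩ := Nat.exists_eq_add_of_le' h
    rw [card_latticePairs_add (by omega)]
    have e : m + (3 * d + 1) = (m + (d - 7)) + (d + 4) + (d + 4) := by omega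
    have hB : (latticePairs (d + 2) (d + 4) (m + (3 * d + 1))).card =
        (latticePairs (d + 2) (d + 4) (m + (d - 7))).card +
          ((m + (3 * d + 1) - (d + 4)) / (d + 2) + 1) + ((m + (3 * d + 1)) / (d + 2) + 1) := by
      rw [e, card_latticePairs_add (by omega), card_latticePairs_add (by omega),
        Nat.add_sub_cancel]
    have key : (latticePairs (d + 1) (3 * d + 1) m).card ≤
        (latticePairs (d + 2) (d + 4) (m + (d - 7))).card := by
      by_cases hm : m = d + 1
      · exact (card_latticePairs_succ_of_lt (by omega) (by omega)).trans
          (two_le_card_latticePairs (by omega))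
      · exact (ih m (by omega) hm).trans
          (card_latticePairs_mono (by omega) (by omega) (by omega))
    omega

/-- An injection from the parts congruent to `±1` modulo `d`, other than
`1`, `d - 1`, `d + 1` and `3 * d + 1`, into strictly smaller numbers congruent modulo `2 * d`
to `1`, `d + 2`, `d + 8` or `d + 16`. -/
def shrinkPart (d x : ℕ) : ℕ :=
  if x % (2 * d) = 1 then x + 15 - d
  else if x % (2 * d) = d + 1 then x + 1 - 2 * d
  else if x % (2 * d) = d - 1 then x + 2 - d
  else x + 9 - d

/-- The inverse of `shrinkPart` on its range. -/
def growPart (d y : ℕ) : ℕ :=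
  if y % (2 * d) = 1 then y + d - 2
  else if y % (2 * d) = d + 2 then y + 2 * d - 1
  else if y % (2 * d) = d + 8 then y + d - 9
  else y + d - 15

/-- The positive integers congruent to `1` or to `d + 2 ^ j` with `1 ≤ j ≤ 4` modulo `2 * d`. -/
def powerResidueParts (d : ℕ) : Set ℕ :=
  {m : ℕ | 0 < m ∧ (m ≡ 1 [MOD 2 * d] ∨ ∃ j, 1 ≤ j ∧ j ≤ 4 ∧ m ≡ d + 2 ^ j [MOD 2 * d])}

/-- The parts on which `shrinkPart d` is used. -/
def IsLargePart (d x : ℕ) : Prop :=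
  (x ≡ 1 [MOD d] ∨ x + 1 ≡ 0 [MOD d]) ∧ x ≠ d - 1 ∧ x ≠ 1 ∧ x ≠ d + 1 ∧ x ≠ 3 * d + 1

theorem IsLargePart.eq_mul_add {d x : ℕ} (hd : 31 ≤ d) (hx : IsLargePart d x) :
    ∃ k, (1 ≤ k ∧ (x = 2 * d * k + 1 ∨ x = 2 * d * k + (d - 1))) ∨
      (2 ≤ k ∧ x = 2 * d * k + (d + 1)) ∨ x = 2 * d * k + (2 * d - 1) := by
  obtain ⟨h, h1, h2, h3, h4⟩ := hx
  have hx := Nat.div_add_mod x (2 * d)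
  have hlt := Nat.mod_lt x (by omega : 0 < 2 * d)
  have hdd : x % (2 * d) % d = x % d := Nat.mod_mul_left_mod x 2 d
  have hr : x % (2 * d) = 1 ∨ x % (2 * d) = d - 1 ∨ x % (2 * d) = d + 1 ∨
      x % (2 * d) = 2 * d - 1 := by
    have hxd : x % d = 1 ∨ x % d = d - 1 := by
      rcases h with h | h
      · left
        rw [h, Nat.mod_eq_of_lt (by omega)]
      · right
        have h0 : (x + 1) % d = 0 := by simpa [Nat.ModEq] using h
        have := Nat.mod_lt x (by omega : 0 < d)
        rw [Nat.add_mod, Nat.mod_eq_of_lt (by omega : 1 < d)] at h0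
        by_contra hne
        rw [Nat.mod_eq_of_lt (by omega)] at h0
        omega
    rcases lt_or_ge (x % (2 * d)) d with hl | hl
    · rw [Nat.mod_eq_of_lt hl] at hdd
      omega
    · rw [Nat.mod_eq_sub_mod hl, Nat.mod_eq_of_lt (by omega)] at hdd
      omega
  obtain ⟨k, hk⟩ : ∃ k, x / (2 * d) = k := ⟨_, rfl⟩
  rw [hk] at hx
  refine ⟨k, ?_⟩
  rcases k with _ | _ | k
  · simp only [mul_zero, zero_add] at hx ⊢
    omega
  · simp only [zero_add, mul_one] at hx ⊢
    omega
  · omega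

theorem shrinkPart_spec {d x : ℕ} (hd : 31 ≤ d) (hx : IsLargePart d x) :
    shrinkPart d x + 1 ≤ x ∧ shrinkPart d x ∈ powerResidueParts d ∧
      growPart d (shrinkPart d x) = x ∧
      shrinkPart d x ≠ 1 ∧ shrinkPart d x ≠ d + 2 ∧ shrinkPart d x ≠ d + 4 := by
  have hmod : ∀ k r, r < 2 * d → (2 * d * k + r) % (2 * d) = r := fun k r hr => by
    rw [Nat.mul_add_mod, Nat.mod_eq_of_lt hr]
  have hpos : ∀ k, 2 * d ≤ 2 * d * (k + 1) := fun k => Nat.le_mul_of_pos_right _ (by omega)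
  obtain ⟨k, ⟨hk, rfl | rfl⟩ | ⟨hk, rfl⟩ | rfl⟩ := hx.eq_mul_add hd
  · obtain ⟨k, rfl⟩ := Nat.exists_eq_add_of_le' hk
    have e : shrinkPart d (2 * d * (k + 1) + 1) = 2 * d * k + (d + 16) := by
      rw [shrinkPart, hmod _ _ (by omega), if_pos rfl, mul_add]
      omega
    have g : growPart d (2 * d * k + (d + 16)) = 2 * d * (k + 1) + 1 := by
      rw [growPart, hmod _ _ (by omega), if_neg (by omega), if_neg (by omega),
        if_neg (by omega), mul_add]
      omega
    rw [e]
    refine ⟨by rw [mul_add]; omega, ⟨by omega, Or.inr ⟨4, by omega, by omega, ?_⟩⟩, g, by omega,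
      ?_, ?_⟩
    · rw [Nat.ModEq, hmod _ _ (by omega), Nat.mod_eq_of_lt (by omega)]
      norm_num
    all_goals
      rcases k with _ | k
      · omega
      · have := hpos k
        omega
  · obtain ⟨k, rfl⟩ := Nat.exists_eq_add_of_le' hk
    have hk' := hpos k
    have e : shrinkPart d (2 * d * (k + 1) + (d - 1)) = 2 * d * (k + 1) + 1 := by
      rw [shrinkPart, hmod _ _ (by omega), if_neg (by omega), if_neg (by omega), if_pos rfl]
      omega
    have g : growPart d (2 * d * (k + 1) + 1) = 2 * d * (k + 1) + (d - 1) := by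
      rw [growPart, hmod _ _ (by omega), if_pos rfl]
      omega
    rw [e]
    refine ⟨by omega, ⟨by omega, Or.inl ?_⟩, g, by omega, by omega, by omega⟩
    rw [Nat.ModEq, hmod _ _ (by omega), Nat.mod_eq_of_lt (by omega)]
  · obtain ⟨k, rfl⟩ := Nat.exists_eq_add_of_le' hk
    have hk' := hpos k
    have e : shrinkPart d (2 * d * (k + 2) + (d + 1)) = 2 * d * (k + 1) + (d + 2) := by
      rw [shrinkPart, hmod _ _ (by omega), if_neg (by omega), if_pos rfl, mul_add, mul_add]
      omega
    have g : growPart d (2 * d * (k + 1) + (d + 2)) = 2 * d * (k + 2) + (d + 1) := by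
      rw [growPart, hmod _ _ (by omega), if_neg (by omega), if_pos rfl, mul_add, mul_add]
      omega
    rw [e]
    refine ⟨by rw [mul_add, mul_add]; omega, ⟨by omega, Or.inr ⟨1, by omega, by omega, ?_⟩⟩, g,
      by omega, by omega, by omega⟩
    rw [Nat.ModEq, hmod _ _ (by omega), Nat.mod_eq_of_lt (by omega)]
    norm_num
  · have e : shrinkPart d (2 * d * k + (2 * d - 1)) = 2 * d * k + (d + 8) := by
      rw [shrinkPart, hmod _ _ (by omega), if_neg (by omega), if_neg (by omega),
        if_neg (by omega)]
      omega
    have g : growPart d (2 * d * k + (d + 8)) = 2 * d * k + (2 * d - 1) := by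
      rw [growPart, hmod _ _ (by omega), if_neg (by omega), if_neg (by omega), if_pos rfl]
      omega
    rw [e]
    refine ⟨by omega, ⟨by omega, Or.inr ⟨3, by omega, by omega, ?_⟩⟩, g, by omega, ?_, ?_⟩
    · rw [Nat.ModEq, hmod _ _ (by omega), Nat.mod_eq_of_lt (by omega)]
      norm_num
    all_goals
      rcases k with _ | k
      · omega
      · have := hpos k
        omega

theorem mem_powerResidueParts_small {d x : ℕ} (h : x = 1 ∨ x = d + 2 ∨ x = d + 4) :
    x ∈ powerResidueParts d := by
  rcases h with rfl | rfl | rfl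
  · exact ⟨by omega, Or.inl rfl⟩
  · exact ⟨by omega, Or.inr ⟨1, by omega, by omega, rfl⟩⟩
  · exact ⟨by omega, Or.inr ⟨2, by omega, by omega, rfl⟩⟩

/-- The parts of `s` different from `1`, `u` and `v`. -/
def otherParts (u v : ℕ) (s : Multiset ℕ) : Multiset ℕ :=
  s.filter fun x => x ≠ 1 ∧ x ≠ u ∧ x ≠ v

/-- The multiset made of `c` ones, `p.2` copies of `u`, `p.1` copies of `v`, and `t`. -/
def assemble (u v c : ℕ) (p : Σ _ : ℕ, ℕ) (t : Multiset ℕ) : Multiset ℕ :=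
  Multiset.replicate c 1 + Multiset.replicate p.2 u + Multiset.replicate p.1 v + t

/-- The multiplicities of `v` and `u` in `s`. -/
def countPair (u v : ℕ) (s : Multiset ℕ) : Σ _ : ℕ, ℕ := ⟨s.count v, s.count u⟩

theorem assemble_otherParts {u v : ℕ} (hu : 1 < u) (huv : u < v) (s : Multiset ℕ) :
    assemble u v (s.count 1) (countPair u v s) (otherParts u v s) = s := by
  ext x
  simp only [assemble, countPair, otherParts, Multiset.count_add, Multiset.count_replicate,
    Multiset.count_filter]
  grind

theorem sum_assemble (u v c : ℕ) (p : Σ _ : ℕ, ℕ) (t : Multiset ℕ) :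
    (assemble u v c p t).sum = c + (p.1 * v + p.2 * u) + t.sum := by
  simp only [assemble, Multiset.sum_add, Multiset.sum_replicate, smul_eq_mul]
  ring

theorem otherParts_assemble {u v c : ℕ} {p : Σ _ : ℕ, ℕ} {t : Multiset ℕ}
    (ht : ∀ x ∈ t, x ≠ 1 ∧ x ≠ u ∧ x ≠ v) : otherParts u v (assemble u v c p t) = t := by
  simp only [otherParts, assemble, Multiset.filter_add, Multiset.filter_eq_self.mpr ht]
  simp [Multiset.filter_eq_nil, Multiset.mem_replicate]

theorem countPair_assemble {u v c : ℕ} (hu : 1 < u) (huv : u < v) {p : Σ _ : ℕ, ℕ}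
    {t : Multiset ℕ} (ht : ∀ x ∈ t, x ≠ 1 ∧ x ≠ u ∧ x ≠ v) :
    countPair u v (assemble u v c p t) = p := by
  have h1 : t.count u = 0 := Multiset.count_eq_zero.mpr fun h => (ht u h).2.1 rfl
  have h2 : t.count v = 0 := Multiset.count_eq_zero.mpr fun h => (ht v h).2.2 rfl
  obtain ⟨b, a⟩ := p
  simp only [assemble, countPair, Multiset.count_add, Multiset.count_replicate, h1, h2]
  grind

theorem eq_of_countPair_eq {u v : ℕ} (hu : 1 < u) (huv : u < v) {s s' : Multiset ℕ}
    (hsum : s.sum = s'.sum) (hp : countPair u v s = countPair u v s')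
    (ht : otherParts u v s = otherParts u v s') : s = s' := by
  have h := assemble_otherParts hu huv s
  have h' := assemble_otherParts hu huv s'
  have e := congrArg Multiset.sum h
  have e' := congrArg Multiset.sum h'
  rw [sum_assemble] at e e'
  rw [hp, ht] at e h
  have : s.count 1 = s'.count 1 := by omega
  rw [this] at h
  exact h.symm.trans h'

theorem sum_map_shrinkPart_add_card_le {d : ℕ} (hd : 31 ≤ d) (t : Multiset ℕ)
    (ht : ∀ x ∈ t, IsLargePart d x) : (t.map (shrinkPart d)).sum + t.card ≤ t.sum := by
  induction t using Multiset.induction_on with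
  | empty => simp
  | cons a t ih =>
    have h1 := ih fun x hx => ht x (Multiset.mem_cons_of_mem hx)
    have h2 := (shrinkPart_spec hd (ht a (Multiset.mem_cons_self a t))).1
    simp only [Multiset.map_cons, Multiset.sum_cons, Multiset.card_cons]
    omega

/-- The pairs of multiplicities allowed next to the large parts `t` inject into those allowed
next to the shrunk parts. -/
theorem exists_injOn_latticePairs {d n : ℕ} (hd : 31 ≤ d) (hn : d + 2 ≤ n) (t : Multiset ℕ)
    (ht : ∀ x ∈ t, IsLargePart d x) (htn : t.sum ≤ n) :
    ∃ g : (Σ _ : ℕ, ℕ) → (Σ _ : ℕ, ℕ),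
      Set.MapsTo g (latticePairs (d + 1) (3 * d + 1) (n - t.sum))
        (latticePairs (d + 2) (d + 4) (n - (t.map (shrinkPart d)).sum)) ∧
      Set.InjOn g (latticePairs (d + 1) (3 * d + 1) (n - t.sum)) := by
  have hsum := sum_map_shrinkPart_add_card_le hd t ht
  have hcard : (latticePairs (d + 1) (3 * d + 1) (n - t.sum)).card ≤
      (latticePairs (d + 2) (d + 4) (n - (t.map (shrinkPart d)).sum)).card := by
    by_cases h : n - t.sum = d + 1
    · have htpos : 0 < t.card := by
        rw [Multiset.card_pos]
        rintro rfl
        simp only [Multiset.sum_zero] at h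
        omega
      exact (card_latticePairs_succ_of_lt (by omega) (by omega)).trans
        (two_le_card_latticePairs (by omega))
    · exact (card_latticePairs_le (by omega) _ h).trans
        (card_latticePairs_mono (by omega) (by omega) (by omega))
  have : Nonempty (Σ _ : ℕ, ℕ) := ⟨⟨0, 0⟩⟩
  obtain ⟨g, hg, hinj⟩ := (Finset.finite_toSet
    (latticePairs (d + 1) (3 * d + 1) (n - t.sum))).exists_injOn_of_encard_le
    (t := (latticePairs (d + 2) (d + 4) (n - (t.map (shrinkPart d)).sum) : Set (Σ _ : ℕ, ℕ)))
    (by simpa only [Set.encard_coe_eq_coe_finsetCard, Nat.cast_le] using hcard)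
  exact ⟨g, hg, hinj⟩

theorem stmt15 (d n : ℕ) (hd : 31 ≤ d) (hn : d + 2 ≤ n) :
    congMinusCount (d - 3) 1 n ≤
      rhoCount {m : ℕ | 0 < m ∧ (m ≡ 1 [MOD 2 * d] ∨
        ∃ j, 1 ≤ j ∧ j ≤ 4 ∧ m ≡ d + 2 ^ j [MOD 2 * d])} n := by
  change _ ≤ rhoCount (powerResidueParts d) n
  have hd3 : d - 3 + 3 = d := by omega
  simp only [congMinusCount, rhoCount, hd3]
  choose! g hmaps hinj using
    fun t ht htn => exists_injOn_latticePairs hd hn t ht htn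
  let T (s : Multiset ℕ) := otherParts (d + 1) (3 * d + 1) s
  let P (s : Multiset ℕ) := g (T s) (countPair (d + 1) (3 * d + 1) s)
  let F (s : Multiset ℕ) : Multiset ℕ :=
    assemble (d + 2) (d + 4)
      (n - ((T s).map (shrinkPart d)).sum - ((P s).1 * (d + 4) + (P s).2 * (d + 2))) (P s)
      ((T s).map (shrinkPart d))
  let A := {p : n.Partition //
    (∀ x ∈ p.parts, x ≡ 1 [MOD d] ∨ x + 1 ≡ 0 [MOD d]) ∧ ∀ x ∈ p.parts, x ≠ d - 1}
  have hT : ∀ p : A, ∀ x ∈ T p.1.parts, IsLargePart d x := fun p x hx => by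
    obtain ⟨hx, hx'⟩ := Multiset.mem_filter.mp hx
    exact ⟨p.2.1 x hx, p.2.2 x hx, hx'⟩
  have hsum : ∀ p : A, p.1.parts.count 1 + ((countPair (d + 1) (3 * d + 1) p.1.parts).1 *
      (3 * d + 1) + (countPair (d + 1) (3 * d + 1) p.1.parts).2 * (d + 1)) +
      (T p.1.parts).sum = n := fun p => by
    rw [← sum_assemble, assemble_otherParts (by omega) (by omega), p.1.parts_sum]
  have hmem : ∀ p : A, countPair (d + 1) (3 * d + 1) p.1.parts ∈
      latticePairs (d + 1) (3 * d + 1) (n - (T p.1.parts).sum) := fun p => by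
    rw [mem_latticePairs (by omega) (by omega)]
    have := hsum p
    omega
  have hTn : ∀ p : A, (T p.1.parts).sum ≤ n := fun p => by
    have := hsum p
    omega
  have hP : ∀ p : A, (P p.1.parts).1 * (d + 4) + (P p.1.parts).2 * (d + 2) ≤
      n - ((T p.1.parts).map (shrinkPart d)).sum := fun p => by
    rw [← mem_latticePairs (by omega) (by omega)]
    exact hmaps _ (hT p) (hTn p) (hmem p)
  have hFsum : ∀ p : A, (F p.1.parts).sum = n := fun p => by
    have h1 := hP p
    have h2 := sum_map_shrinkPart_add_card_le hd _ (hT p)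
    have h3 := hTn p
    simp only [F, sum_assemble]
    omega
  have hFmem : ∀ p : A, ∀ x ∈ F p.1.parts, x ∈ powerResidueParts d := fun p x hx => by
    simp only [F, assemble, Multiset.mem_add, Multiset.mem_map] at hx
    rcases hx with ((hx | hx) | hx) | ⟨y, hy, rfl⟩
    · exact mem_powerResidueParts_small (.inl (Multiset.eq_of_mem_replicate hx))
    · exact mem_powerResidueParts_small (.inr (.inl (Multiset.eq_of_mem_replicate hx)))
    · exact mem_powerResidueParts_small (.inr (.inr (Multiset.eq_of_mem_replicate hx)))
    · exact (shrinkPart_spec hd (hT p y hy)).2.1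
  have hshrunk : ∀ p : A, ∀ x ∈ (T p.1.parts).map (shrinkPart d),
      x ≠ 1 ∧ x ≠ d + 2 ∧ x ≠ d + 4 := fun p x hx => by
    obtain ⟨y, hy, rfl⟩ := Multiset.mem_map.mp hx
    exact (shrinkPart_spec hd (hT p y hy)).2.2.2
  have hgrow : ∀ p : A, ((T p.1.parts).map (shrinkPart d)).map (growPart d) = T p.1.parts :=
    fun p => by
      rw [Multiset.map_map]
      exact (Multiset.map_congr rfl fun x hx =>
        (shrinkPart_spec hd (hT p x hx)).2.2.1).trans (Multiset.map_id _)
  let f (p : A) : {q : n.Partition // ∀ x ∈ q.parts, x ∈ powerResidueParts d} :=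
    ⟨⟨F p.1.parts, fun hx => (hFmem p _ hx).1, hFsum p⟩, hFmem p⟩
  refine Nat.card_le_card_of_injective f fun p q hpq => ?_
  have hF : F p.1.parts = F q.1.parts := congrArg (fun r => r.1.parts) hpq
  have hTeq : T p.1.parts = T q.1.parts := by
    have h := congrArg (otherParts (d + 2) (d + 4)) hF
    simp only [F] at h
    rw [otherParts_assemble (hshrunk p), otherParts_assemble (hshrunk q)] at h
    rw [← hgrow p, ← hgrow q, h]
  have hPeq : P p.1.parts = P q.1.parts := by
    have h := congrArg (countPair (d + 2) (d + 4)) hF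
    simp only [F] at h
    rwa [countPair_assemble (by omega) (by omega) (hshrunk p),
      countPair_assemble (by omega) (by omega) (hshrunk q)] at h
  have hcount : countPair (d + 1) (3 * d + 1) p.1.parts =
      countPair (d + 1) (3 * d + 1) q.1.parts := by
    have hq := hmem q
    simp only [P] at hPeq
    rw [← hTeq] at hPeq hq
    exact hinj _ (hT p) (hTn p) (hmem p) hq hPeq
  refine Subtype.ext (Nat.Partition.ext ?_)
  exact eq_of_countPair_eq (by omega) (by omega) (by rw [p.1.parts_sum, q.1.parts_sum])
    hcount hTeq
end

section
/- For all integers a ≥ 5, all integers k ≥ 2^{a+3} − 1, and all integers m with 1 ≤ m ≤ 5k + 1, one has q_k^{(1)}(m) ≥ ρ(T_{a,k}; m). -/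
/-- The `{i, m - i}` with `i + k ≤ m - i`, together with `{m}`, have successive parts
differing by at least `k`. -/
theorem succ_half_le_gapCount {k m : ℕ} (hk : 0 < k) (hm : 1 ≤ m) :
    (m - k) / 2 + 1 ≤ gapCount k 1 m := by
  have key : ∀ i : Fin ((m - k) / 2 + 1), ∃ p : m.Partition,
      ((∀ x ∈ p.parts, 1 ≤ x) ∧
        List.Chain' (fun x y => x + k ≤ y) (p.parts.sort (· ≤ ·))) ∧
      p.parts = if i.1 = 0 then {m} else {i.1, m - i.1} := by
    intro i
    by_cases hi : i.1 = 0
    · refine ⟨⟨{m}, ?_, ?_⟩, ⟨?_, ?_⟩, ?_⟩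
      · simp; omega
      · simp
      · simpa using hm
      · rw [Multiset.sort_singleton]
        exact List.IsChain.singleton _
      · simp [hi]
    · have := i.2
      refine ⟨⟨{i.1, m - i.1}, ?_, ?_⟩, ⟨?_, ?_⟩, ?_⟩
      · intro x hx
        simp only [Multiset.insert_eq_cons, Multiset.mem_cons, Multiset.mem_singleton] at hx
        omega
      · rw [Multiset.insert_eq_cons, Multiset.sum_cons, Multiset.sum_singleton]
        omega
      · intro x hx
        simp only [Multiset.insert_eq_cons, Multiset.mem_cons, Multiset.mem_singleton] at hx
        omega
      · have hs : Multiset.sort ({i.1, m - i.1} : Multiset ℕ) (· ≤ ·) = [i.1, m - i.1] := by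
          rw [Multiset.insert_eq_cons, Multiset.sort_cons, Multiset.sort_singleton]
          simp; omega
        show List.IsChain _ (Multiset.sort ({i.1, m - i.1} : Multiset ℕ) (· ≤ ·))
        rw [hs]
        simp; omega
      · simp [hi]
  choose f hf hparts using key
  have hinj : Function.Injective
      (fun i => (⟨f i, hf i⟩ : {p : m.Partition // (∀ x ∈ p.parts, 1 ≤ x) ∧
        List.Chain' (fun x y => x + k ≤ y) (p.parts.sort (· ≤ ·))})) := by
    intro i j hij
    have h : (f i).parts = (f j).parts :=
      congrArg (fun p => p.1.parts) hij
    rw [hparts, hparts] at h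
    have hi := i.2
    have hj := j.2
    apply Fin.ext
    split_ifs at h with h₁ h₂ h₂
    · omega
    · simpa using congrArg Multiset.card h
    · simpa using congrArg Multiset.card h
    · have : i.1 ∈ ({j.1, m - j.1} : Multiset ℕ) := by rw [← h]; simp
      simp at this
      omega
  simpa [gapCount] using Nat.card_le_card_of_injective _ hinj

/-- A partition is determined by its parts different from `1`. -/
theorem rhoCount_le_card {R : Set ℕ} {m : ℕ} (F : Finset (Multiset ℕ))
    (hF : ∀ s : Multiset ℕ, (∀ x ∈ s, x ∈ R ∧ x ≠ 1) → s.sum ≤ m → s ∈ F) :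
    rhoCount R m ≤ F.card := by
  have hsum : ∀ s : Multiset ℕ,
      s.sum = (s.filter (· ≠ 1)).sum + (s.filter (¬ · ≠ 1)).sum := fun s => by
    rw [← Multiset.sum_add, Multiset.filter_add_not]
  have hones : ∀ s : Multiset ℕ,
      s.filter (¬ · ≠ 1) = Multiset.replicate (s.filter (¬ · ≠ 1)).card 1 := fun s =>
    Multiset.eq_replicate_card.mpr fun x hx => by simpa using (Multiset.mem_filter.mp hx).2
  let g : {p : m.Partition // ∀ x ∈ p.parts, x ∈ R} → F := fun p =>
    ⟨p.1.parts.filter (· ≠ 1), hF _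
      (fun x hx => ⟨p.2 x (Multiset.mem_filter.mp hx).1, (Multiset.mem_filter.mp hx).2⟩)
      (by have := hsum p.1.parts; rw [p.1.parts_sum] at this; omega)⟩
  have hg : Function.Injective g := by
    intro p q hpq
    have h : p.1.parts.filter (· ≠ 1) = q.1.parts.filter (· ≠ 1) := Subtype.ext_iff.mp hpq
    have hp := hsum p.1.parts
    have hq := hsum q.1.parts
    rw [p.1.parts_sum, hones, Multiset.sum_replicate] at hp
    rw [q.1.parts_sum, hones, Multiset.sum_replicate] at hq
    rw [h] at hp
    apply Subtype.ext
    apply Nat.Partition.ext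
    rw [← Multiset.filter_add_not (· ≠ 1) p.1.parts, ← Multiset.filter_add_not (· ≠ 1) q.1.parts,
      h, hones p.1.parts, hones q.1.parts]
    congr 2
    simp only [smul_eq_mul, mul_one] at hp hq
    omega
  simpa [rhoCount] using Nat.card_le_card_of_injective g hg

/-- There are at most `(|S| + n).choose n` multisets on `S` with at most `n` elements. -/
theorem exists_finset_multiset_card_le (S : Finset ℕ) (n : ℕ) :
    ∃ F : Finset (Multiset ℕ), F.card ≤ (S.card + n).choose n ∧
      ∀ s : Multiset ℕ, (∀ x ∈ s, x ∈ S) → s.card ≤ n → s ∈ F := by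
  classical
  refine ⟨(Finset.univ : Finset (Sym (Option S) n)).image
    (fun t => t.1.filterMap (Option.map Subtype.val)), ?_, ?_⟩
  · refine Finset.card_image_le.trans ?_
    rw [Finset.card_univ, Sym.card_sym_eq_choose]
    simp [Nat.add_right_comm]
  · intro s hs hn
    lift s to Multiset {x // x ∈ S} using hs
    rw [Multiset.card_map] at hn
    refine Finset.mem_image.mpr
      ⟨⟨s.map some + Multiset.replicate (n - s.card) none, by simp; omega⟩,
        Finset.mem_univ _, ?_⟩
    have h₁ : (Multiset.replicate (n - s.card) (none : Option S)).filterMap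
        (Option.map Subtype.val) = 0 := by
      induction n - s.card with
      | zero => simp
      | succ d ih => simpa [Multiset.replicate_succ] using ih
    have h₂ : (s.map some).filterMap (Option.map Subtype.val) = s.map Subtype.val := by
      rw [Multiset.filterMap_map, ← Multiset.filterMap_eq_map]
      rfl
    rw [Multiset.filterMap_add, h₁, h₂, add_zero]

theorem quartic_le_two_pow {r : ℕ} (hr : 4 ≤ r) :
    (r + 5).choose 4 + r * (r + 1) + 1 ≤ 2 ^ (r + 4) := by
  have hpoly : (r + 5) * (r + 4) * (r + 3) * (r + 2) + 24 * (r * (r + 1)) + 24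
      ≤ 24 * 2 ^ (r + 4) := by
    induction r, hr using Nat.le_induction with
    | base => norm_num
    | succ r hr ih =>
      obtain ⟨t, rfl⟩ := Nat.exists_eq_add_of_le hr
      rw [show 4 + t + 1 + 4 = (4 + t + 4) + 1 by ring, pow_succ]
      refine le_trans ?_ (by linarith [Nat.mul_le_mul_right 2 ih] :
        ((4 + t + 5) * (4 + t + 4) * (4 + t + 3) * (4 + t + 2)
          + 24 * ((4 + t) * (4 + t + 1)) + 24) * 2 ≤ _)
      ring_nf
      gcongr <;> omega
  have hchoose : (r + 5).choose 4 * 24 = (r + 5) * (r + 4) * (r + 3) * (r + 2) := by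
    have := Nat.descFactorial_eq_factorial_mul_choose (r + 5) 4
    simp only [Nat.descFactorial, Nat.factorial] at this
    norm_num at this
    rw [mul_comm, ← this]
    rw [show r + 5 - 3 = r + 2 by omega, show r + 5 - 2 = r + 3 by omega]
    ring
  omega

theorem card_mul_le_sum {s : Multiset ℕ} {c : ℕ} (h : ∀ x ∈ s, c ≤ x) :
    s.card * c ≤ s.sum := by
  simpa using Multiset.card_nsmul_le_sum h

theorem stmt16 (a k m : ℕ) (ha : 5 ≤ a) (hk : 2 ^ (a + 3) - 1 ≤ k)
    (hm1 : 1 ≤ m) (hm2 : m ≤ 5 * k + 1) :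
    rhoCount {x : ℕ | 0 < x ∧ (x ≡ 1 [MOD 2 * k] ∨
      ∃ j, 1 ≤ j ∧ j ≤ a - 1 ∧ x ≡ k + 2 ^ j [MOD 2 * k])} m ≤
    gapCount k 1 m := by
  classical
  obtain ⟨r, rfl⟩ : ∃ r, a = r + 1 := ⟨a - 1, by omega⟩
  have hr : 4 ≤ r := by omega
  rw [show r + 1 + 3 = r + 4 by ring] at hk
  have hquart := quartic_le_two_pow hr
  have hquad := Nat.choose_le_two_pow (r + 3) 2
  have hdouble : 2 ^ (r + 4) = 2 * 2 ^ (r + 3) := by ring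
  have hsixteen : 2 ^ (r + 4) = 16 * 2 ^ r := by ring
  have hpow : ∀ j, 1 ≤ j → j ≤ r → 2 ≤ 2 ^ j ∧ 2 ^ j < k := fun j h₁ h₂ => by
    have := Nat.pow_le_pow_right (n := 2) (by norm_num) h₁
    have := Nat.pow_le_pow_right (n := 2) (by norm_num) h₂
    omega
  have hk0 : 0 < k := by have := hpow 1 le_rfl (by omega); omega
  refine le_trans ?_ (succ_half_le_gapCount hk0 hm1)
  let P : Finset ℕ := (Finset.Icc 1 r).image (fun j => k + 2 ^ j)
  have hPcard : P.card ≤ r := Finset.card_image_le.trans (by simp)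
  have hP : ∀ j, 1 ≤ j → j ≤ r → k + 2 ^ j ∈ P := fun j h₁ h₂ =>
    Finset.mem_image_of_mem _ (Finset.mem_Icc.mpr ⟨h₁, h₂⟩)
  have hScard : (insert (2 * k + 1) P).card ≤ r + 1 := (Finset.card_insert_le _ _).trans (by omega)
  have hclass : ∀ x, x ≤ 5 * k + 1 → (x ∈ {x : ℕ | 0 < x ∧ (x ≡ 1 [MOD 2 * k] ∨
      ∃ j, 1 ≤ j ∧ j ≤ r + 1 - 1 ∧ x ≡ k + 2 ^ j [MOD 2 * k])} ∧ x ≠ 1) →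
      k + 2 ≤ x ∧ (x = 2 * k + 1 ∨ x = 4 * k + 1 ∨
        ∃ j, 1 ≤ j ∧ j ≤ r ∧ (x = k + 2 ^ j ∨ x = 3 * k + 2 ^ j)) := by
    rintro x hx ⟨⟨-, h | ⟨j, h₁, h₂, h⟩⟩, hne⟩
    · have h1 : 1 % (2 * k) = 1 := Nat.mod_eq_of_lt (by omega)
      have hdiv := Nat.div_add_mod x (2 * k)
      rw [h, h1] at hdiv
      have hlt : x / (2 * k) < 3 := Nat.div_lt_of_lt_mul (by omega)
      generalize x / (2 * k) = c at hdiv hlt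
      interval_cases c <;> omega
    · obtain ⟨h3, h4⟩ := hpow j h₁ (by omega)
      have h1 : (k + 2 ^ j) % (2 * k) = k + 2 ^ j := Nat.mod_eq_of_lt (by omega)
      have hdiv := Nat.div_add_mod x (2 * k)
      rw [h, h1] at hdiv
      have hlt : x / (2 * k) < 3 := Nat.div_lt_of_lt_mul (by omega)
      generalize x / (2 * k) = c at hdiv hlt
      refine ⟨by omega, Or.inr (Or.inr ⟨j, h₁, by omega, ?_⟩)⟩
      interval_cases c <;> omega
  have hmem : ∀ s : Multiset ℕ, s.sum ≤ m → ∀ x ∈ s, x ≤ s.sum ∧ x ≤ 5 * k + 1 :=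
    fun s hs x hx => by have := Multiset.le_sum_of_mem hx; omega
  rcases lt_or_ge m (2 * k) with h2 | h2
  · let F : Finset (Multiset ℕ) :=
      insert 0 ((Finset.Icc 1 ((m - k) / 2)).image (fun j => {k + 2 ^ j}))
    have hF : F.card ≤ (m - k) / 2 + 1 :=
      (Finset.card_insert_le _ _).trans
        (Nat.add_le_add_right (Finset.card_image_le.trans (by simp)) 1)
    refine (rhoCount_le_card F ?_).trans hF
    intro s hs hsum
    have hlow := card_mul_le_sum fun x hx => (hclass x (hmem s hsum x hx).2 (hs x hx)).1
    have hcard : s.card < 2 := by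
      by_contra! hc
      have := Nat.mul_le_mul_right (k + 2) hc
      omega
    rcases (by omega : s.card = 0 ∨ s.card = 1) with h0 | h1
    · rw [Multiset.card_eq_zero.mp h0]
      exact Finset.mem_insert_self _ _
    · obtain ⟨x, rfl⟩ := Multiset.card_eq_one.mp h1
      have hx := hmem _ hsum x (by simp)
      obtain ⟨-, h | h | ⟨j, h₁, h₂, h | h⟩⟩ := hclass x hx.2 (hs x (by simp))
      · omega
      · omega
      · refine Finset.mem_insert_of_mem (Finset.mem_image.mpr ⟨j, ?_, by rw [h]⟩)
        have hj : j - 1 < 2 ^ (j - 1) := Nat.lt_two_pow_self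
        have hj' : 2 ^ j = 2 * 2 ^ (j - 1) := by
          rw [← pow_succ', Nat.sub_add_cancel h₁]
        rw [Finset.mem_Icc]
        omega
      · have := hpow j h₁ h₂; omega
  rcases lt_or_ge m (3 * k) with h3 | h3
  · obtain ⟨F, hFcard, hF⟩ := exists_finset_multiset_card_le (insert (2 * k + 1) P) 2
    have hmono : F.card ≤ (r + 3).choose 2 := hFcard.trans (Nat.choose_le_choose _ (by omega))
    refine (rhoCount_le_card F ?_).trans (by omega)
    intro s hs hsum
    have hlow := card_mul_le_sum fun x hx => (hclass x (hmem s hsum x hx).2 (hs x hx)).1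
    refine hF s (fun x hx => ?_) ?_
    · have hx' := hmem s hsum x hx
      obtain ⟨-, h | h | ⟨j, h₁, h₂, h | h⟩⟩ := hclass x hx'.2 (hs x hx)
      · simp [h]
      · omega
      · rw [h]; exact Finset.mem_insert_of_mem (hP j h₁ h₂)
      · have := hpow j h₁ h₂; omega
    · by_contra! hc
      have := Nat.mul_le_mul_right (k + 2) (show 3 ≤ s.card from hc)
      omega
  · obtain ⟨F, hFcard, hF⟩ := exists_finset_multiset_card_le (insert (2 * k + 1) P) 4
    have hmono : F.card ≤ (r + 5).choose 4 := hFcard.trans (Nat.choose_le_choose _ (by omega))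
    let G : Finset (Multiset ℕ) :=
      (Finset.Icc 1 r ×ˢ insert 0 (P.image (fun x => ({x} : Multiset ℕ)))).image
        (fun y => (3 * k + 2 ^ y.1) ::ₘ y.2)
    have hG : G.card ≤ r * (r + 1) := by
      refine Finset.card_image_le.trans ?_
      rw [Finset.card_product, Nat.card_Icc]
      exact Nat.mul_le_mul (by omega) ((Finset.card_insert_le _ _).trans
        (Nat.add_le_add_right (Finset.card_image_le.trans hPcard) 1))
    have hFG : (insert {4 * k + 1} (F ∪ G)).card ≤ (m - k) / 2 + 1 := by
      have := Finset.card_insert_le ({4 * k + 1} : Multiset ℕ) (F ∪ G)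
      have := Finset.card_union_le F G
      omega
    refine (rhoCount_le_card _ ?_).trans hFG
    intro s hs hsum
    have hlow : ∀ x ∈ s, k + 2 ≤ x := fun x hx => (hclass x (hmem s hsum x hx).2 (hs x hx)).1
    by_cases h4 : 4 * k + 1 ∈ s
    · obtain ⟨t, rfl⟩ := Multiset.exists_cons_of_mem h4
      rw [Multiset.sum_cons] at hsum
      have ht := card_mul_le_sum fun x hx => hlow x (Multiset.mem_cons_of_mem hx)
      have ht0 : t.card = 0 := by
        by_contra hc
        have := Nat.mul_le_mul_right (k + 2) (Nat.one_le_iff_ne_zero.mpr hc)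
        omega
      rw [Multiset.card_eq_zero.mp ht0]
      exact Finset.mem_insert_self _ _
    refine Finset.mem_insert_of_mem (Finset.mem_union.mpr ?_)
    by_cases h5 : ∃ j, 1 ≤ j ∧ j ≤ r ∧ 3 * k + 2 ^ j ∈ s
    · right
      obtain ⟨j, h₁, h₂, hj⟩ := h5
      have hj2 := hpow j h₁ h₂
      obtain ⟨t, rfl⟩ := Multiset.exists_cons_of_mem hj
      have hsum' := hsum
      rw [Multiset.sum_cons] at hsum'
      have ht := card_mul_le_sum fun x hx => hlow x (Multiset.mem_cons_of_mem hx)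
      have hcard : t.card < 2 := by
        by_contra! hc
        have := Nat.mul_le_mul_right (k + 2) hc
        omega
      refine Finset.mem_image.mpr ⟨(j, t), Finset.mem_product.mpr
        ⟨Finset.mem_Icc.mpr ⟨h₁, h₂⟩, ?_⟩, rfl⟩
      rcases (by omega : t.card = 0 ∨ t.card = 1) with h0 | h1
      · rw [Multiset.card_eq_zero.mp h0]
        exact Finset.mem_insert_self _ _
      · obtain ⟨x, rfl⟩ := Multiset.card_eq_one.mp h1
        rw [Multiset.sum_singleton] at hsum'
        obtain ⟨-, h | h | ⟨i, hi₁, hi₂, h | h⟩⟩ := hclass x (by omega) (hs x (by simp))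
        · omega
        · omega
        · refine Finset.mem_insert_of_mem (Finset.mem_image_of_mem _ ?_)
          rw [h]; exact hP i hi₁ hi₂
        · have := hpow i hi₁ hi₂; omega
    · left
      refine hF s (fun x hx => ?_) ?_
      · obtain ⟨-, h | h | ⟨j, h₁, h₂, h | h⟩⟩ := hclass x (hmem s hsum x hx).2 (hs x hx)
        · simp [h]
        · exact absurd (h ▸ hx) h4
        · rw [h]; exact Finset.mem_insert_of_mem (hP j h₁ h₂)
        · exact absurd ⟨j, h₁, h₂, h ▸ hx⟩ h5
      · by_contra! hc
        have := card_mul_le_sum hlow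
        have := Nat.mul_le_mul_right (k + 2) (show 5 ≤ s.card from hc)
        omega
end
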